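/- Let α ∈ [0,1) and let G be a connected graph with ρ := ρ_α(G) ≥ 2. Let P = (u_1,…,u_{r+1}) be a pendent path in G with root u_1, and let x_1,…,x_{r+1} be the entries of a positive unit eigenvector of A_α(G) with eigenvalue ρ corresponding to u_1,…,u_{r+1}. If γ = (1/2)((ρ−2α)/(1−α) + sqrt(((ρ−2α)/(1−α))² − 4)), then x_i / x_1 > (1 − γ^{−2})·γ^{−i+1} for every i = 1,…,r. -/

import Mathlib

/-!
Write `t = (ρ - 2α)/(1-α) ≥ 2`, so that `γ + γ⁻¹ = t` and `γ ≥ 1`, and let `y i` be the entry of `x`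
at the `i`-th vertex of the path. At an internal vertex of the path the eigenvalue equation reads
`t * y i = y (i-1) + y (i+1)`, and at the last vertex it gives `t * y r ≤ y (r-1)` (with equality
iff `α = 0`). The recurrence factors in two ways: `y (i+1) - γ⁻¹ * y i` is multiplied by `γ` at each
step, and `γ * y i - y (i+1)` is multiplied by `γ⁻¹`. By the first, the end condition propagates back
to the root as `y 1 ≤ γ⁻¹ * y 0`. By the second,
`γ * y i - y (i+1) = γ⁻¹ ^ i * (γ * y 0 - y 1) ≥ γ⁻¹ ^ i * (γ - γ⁻¹) * y 0`,
and `y (i+1) > 0` gives the strict bound on `y i`.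
-/


/-- The spectral radius (largest eigenvalue) of a real symmetric matrix, as the
supremum of its set of real eigenvalues. -/
noncomputable def specRad {n : Type*} [Fintype n] (M : Matrix n n ℝ) : ℝ :=
  sSup {t : ℝ | ∃ v : n → ℝ, v ≠ 0 ∧ M.mulVec v = t • v}

/-- The matrix `A_α(G) = α·D(G) + (1-α)·A(G)`. -/
noncomputable def Aalpha {V : Type*} [Fintype V] [DecidableEq V]
    (α : ℝ) (G : SimpleGraph V) : Matrix V V ℝ :=
  letI := Classical.decRel G.Adj
  α • Matrix.diagonal (fun v => (G.degree v : ℝ)) + (1 - α) • G.adjMatrix ℝ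

/-- The `α`-index `ρ_α(G)`: the spectral radius of `A_α(G)`. -/
noncomputable def rhoAlpha {V : Type*} [Fintype V] [DecidableEq V]
    (α : ℝ) (G : SimpleGraph V) : ℝ :=
  specRad (Aalpha α G)


/-- `w` is a cut vertex of `G`: `G` is connected but deleting `w` disconnects it. -/
def IsCutVertex {V : Type*} (G : SimpleGraph V) (w : V) : Prop :=
  G.Connected ∧ ¬ (G.induce {x | x ≠ w}).Connected

/-- `(u 0, u 1, …, u r)` is a pendent path of `G` with root `u 0`:
the vertices are distinct, consecutive ones are adjacent, the root is a cut
vertex of `G`, the internal vertices have degree 2 in `G`, and the last vertex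
has degree 1 in `G`. -/
def IsPendentPath {V : Type*} [Fintype V] [DecidableEq V]
    (G : SimpleGraph V) {r : ℕ} (u : Fin (r + 1) → V) : Prop :=
  letI := Classical.decRel G.Adj
  Function.Injective u ∧
  (∀ i : Fin r, G.Adj (u i.castSucc) (u i.succ)) ∧
  (∀ i : Fin (r + 1), 0 < i.val → i.val < r → G.degree (u i) = 2) ∧
  (0 < r → G.degree (u (Fin.last r)) = 1) ∧
  IsCutVertex G (u 0)

/-- `γ`, the larger root of `X² − ((ρ−2α)/(1−α))X + 1 = 0`. -/
noncomputable def gammaOf (α ρ : ℝ) : ℝ :=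
  (1 / 2) * ((ρ - 2 * α) / (1 - α) +
    Real.sqrt (((ρ - 2 * α) / (1 - α)) ^ 2 - 4))

/-- The scalar part of the argument, with `q` in the role of `γ⁻¹`: a positive solution of the
recurrence with characteristic roots `g` and `q = 1 / g` that satisfies the end condition at `r`. -/
lemma recurrence_lower_bound {g q : ℝ} (hg : 0 < g) (hq : 0 < q) (hgq : g * q = 1)
    {r : ℕ} (hr : 0 < r) (y : ℕ → ℝ) (hy : ∀ n, 0 < y n)
    (hrec : ∀ n, n + 1 < r → (g + q) * y (n + 1) = y n + y (n + 2))
    (hend : (g + q) * y r ≤ y (r - 1)) {n : ℕ} (hn : n < r) :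
    (1 - q ^ 2) * q ^ n * y 0 < y n := by
  have h1 : y 1 ≤ q * y 0 := by
    by_contra! hlt
    have hall : ∀ m, m < r → q * y m < y (m + 1) := by
      intro m
      induction m with
      | zero => intro _; simpa using hlt
      | succ m ih =>
        intro hm
        have h2 := hrec m hm
        have h3 := mul_lt_mul_of_pos_left (ih (by omega)) hg
        have h4 : g * (q * y m) = y m := by rw [← mul_assoc, hgq, one_mul]
        linarith
    have h2 := hall (r - 1) (by omega)
    rw [Nat.sub_add_cancel hr] at h2
    have h3 := mul_lt_mul_of_pos_left h2 hg
    have h4 : g * (q * y (r - 1)) = y (r - 1) := by rw [← mul_assoc, hgq, one_mul]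
    have h5 := mul_pos hq (hy r)
    linarith
  have hdiff : ∀ m, m < r → g * y m - y (m + 1) = q ^ m * (g * y 0 - y 1) := by
    intro m
    induction m with
    | zero => intro _; simp
    | succ m ih =>
      intro hm
      have h2 := hrec m hm
      have h4 : q * (g * y m) = y m := by rw [← mul_assoc, mul_comm q, hgq, one_mul]
      rw [pow_succ, mul_comm (q ^ m), mul_assoc, ← ih (by omega)]
      linarith
  have h2 := hdiff n hn
  have h3 : q ^ n * ((g - q) * y 0) ≤ q ^ n * (g * y 0 - y 1) :=
    mul_le_mul_of_nonneg_left (by linarith) (by positivity)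
  have h4 : q ^ n * ((g - q) * y 0) < g * y n := by linarith [hy (n + 1)]
  have h5 := mul_lt_mul_of_pos_left h4 hq
  have h6 : q * (g * y n) = y n := by rw [← mul_assoc, mul_comm q, hgq, one_mul]
  have h7 : q * (q ^ n * ((g - q) * y 0)) = (1 - q ^ 2) * q ^ n * y 0 := by
    linear_combination q ^ n * y 0 * hgq
  linarith

lemma one_le_gammaOf {α ρ : ℝ} (ht : 2 ≤ (ρ - 2 * α) / (1 - α)) : 1 ≤ gammaOf α ρ := by
  unfold gammaOf
  linarith [Real.sqrt_nonneg (((ρ - 2 * α) / (1 - α)) ^ 2 - 4)]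

lemma gammaOf_add_inv {α ρ : ℝ} (ht : 2 ≤ (ρ - 2 * α) / (1 - α)) :
    gammaOf α ρ + (gammaOf α ρ)⁻¹ = (ρ - 2 * α) / (1 - α) := by
  have h1 := one_le_gammaOf ht
  have h0 : gammaOf α ρ ≠ 0 := by linarith
  have hs : Real.sqrt (((ρ - 2 * α) / (1 - α)) ^ 2 - 4) ^ 2 = ((ρ - 2 * α) / (1 - α)) ^ 2 - 4 :=
    Real.sq_sqrt (by nlinarith)
  have hq : gammaOf α ρ * gammaOf α ρ + 1 = (ρ - 2 * α) / (1 - α) * gammaOf α ρ := by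
    unfold gammaOf
    linear_combination (1 / 4) * hs
  generalize (ρ - 2 * α) / (1 - α) = t at hq ⊢
  field_simp
  linarith

lemma Aalpha_mulVec_apply {V : Type*} [Fintype V] [DecidableEq V] (α : ℝ) (G : SimpleGraph V)
    [DecidableRel G.Adj] (x : V → ℝ) (w : V) :
    (Aalpha α G).mulVec x w =
      α * G.degree w * x w + (1 - α) * ∑ v ∈ G.neighborFinset w, x v := by
  have h : Aalpha α G =
      α • Matrix.diagonal (fun v => (G.degree v : ℝ)) + (1 - α) • G.adjMatrix ℝ := by
    unfold Aalpha
    congr!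
  rw [h, Matrix.add_mulVec, Matrix.smul_mulVec, Matrix.smul_mulVec]
  simp [Matrix.mulVec_diagonal, SimpleGraph.adjMatrix_mulVec_apply, mul_assoc]

/-- Let `α ∈ [0,1)` and `G` a connected graph with
`ρ := ρ_α(G) ≥ 2`. Let `(u 0, …, u r)` be a pendent path in `G` with root `u 0`,
and let `x` be a positive unit eigenvector of `A_α(G)` with eigenvalue `ρ`.
With `γ` as usual, `x_i / x_1 > (1 − γ⁻²)·γ^{−i+1}` for `i = 1, …, r`
(1-indexed); 0-indexed: `x (u i) / x (u 0) > (1 − γ⁻²)·γ^{−i}` for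
`i = 0, …, r−1`. -/
theorem pendentPath_lower_bound (α : ℝ) (hα0 : 0 ≤ α) (hα1 : α < 1)
    {V : Type*} [Fintype V] [DecidableEq V] (G : SimpleGraph V)
    (hconn : G.Connected) (hρ : 2 ≤ rhoAlpha α G)
    {r : ℕ} (u : Fin (r + 1) → V) (hpath : IsPendentPath G u)
    (x : V → ℝ) (hx : ∀ w, 0 < x w) (hunit : ∑ w, x w ^ 2 = 1)
    (heig : (Aalpha α G).mulVec x = rhoAlpha α G • x) :
    ∀ i : Fin r,
      (1 - gammaOf α (rhoAlpha α G) ^ (-2 : ℤ)) *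
          gammaOf α (rhoAlpha α G) ^ (-(i.val : ℤ)) <
        x (u i.castSucc) / x (u 0) := by
  intro i
  let := Classical.decRel G.Adj
  obtain ⟨hinj, hadj, hdeg2, hdeg1, -⟩ := hpath
  have hr : 0 < r := i.pos
  have hα : 0 < 1 - α := by linarith
  have heq : ∀ w, α * G.degree w * x w + (1 - α) * ∑ v ∈ G.neighborFinset w, x v =
      rhoAlpha α G * x w := by
    intro w
    rw [← Aalpha_mulVec_apply, heig]
    simp
  generalize rhoAlpha α G = ρ at *
  have ht : 2 ≤ (ρ - 2 * α) / (1 - α) := by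
    rw [le_div_iff₀ hα]; linarith
  have hsum := gammaOf_add_inv ht
  have hg : 0 < gammaOf α ρ := by linarith [one_le_gammaOf ht]
  generalize gammaOf α ρ = g at *
  have hsum' : (g + g⁻¹) * (1 - α) = ρ - 2 * α := by
    rw [hsum]
    exact div_mul_cancel₀ _ (ne_of_gt hα)
  -- Indices are capped at `r`, so that the vertex sequence is defined on all of `ℕ`.
  let U : ℕ → V := fun n => u ⟨min n r, by omega⟩
  have hU : ∀ n (h : n < r + 1), U n = u ⟨n, h⟩ := by
    intro n h
    simp only [U]
    congr 2
    omega
  have hUadj : ∀ n, n < r → G.Adj (U n) (U (n + 1)) := by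
    intro n h
    rw [hU n (by omega), hU (n + 1) (by omega)]
    exact hadj ⟨n, h⟩
  have key := recurrence_lower_bound hg (inv_pos.2 hg) (mul_inv_cancel₀ hg.ne') hr
    (fun n => x (U n)) (fun n => hx _) ?_ ?_ i.2
  · rw [lt_div_iff₀ (hx _)]
    have h0 : U 0 = u 0 := hU 0 (by omega)
    have hi : U i.val = u i.castSucc := hU i.val (by omega)
    simp only [h0, hi] at key
    have e2 : g ^ (-2 : ℤ) = g⁻¹ ^ 2 := by
      rw [zpow_neg, inv_pow]; norm_cast
    rw [e2, zpow_neg, zpow_natCast, ← inv_pow]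
    exact key
  · intro n hn
    have hd : G.degree (U (n + 1)) = 2 := by
      rw [hU (n + 1) (by omega)]
      exact hdeg2 _ (Nat.succ_pos n) hn
    have hne : U n ≠ U (n + 2) := by
      rw [hU n (by omega), hU (n + 2) (by omega)]
      intro h
      simpa using hinj h
    have hN : {U n, U (n + 2)} = G.neighborFinset (U (n + 1)) := by
      apply Finset.eq_of_subset_of_card_le
      · intro v hv
        rw [SimpleGraph.mem_neighborFinset]
        rcases Finset.mem_insert.1 hv with rfl | hv
        · exact (hUadj n (by omega)).symm
        · rw [Finset.mem_singleton.1 hv]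
          exact hUadj (n + 1) hn
      · rw [SimpleGraph.card_neighborFinset_eq_degree, hd, Finset.card_pair hne]
    have h := heq (U (n + 1))
    rw [← hN, Finset.sum_pair hne, hd] at h
    push_cast at h
    apply mul_left_cancel₀ hα.ne'
    linear_combination x (U (n + 1)) * hsum' - h
  · have hd : G.degree (U r) = 1 := by
      rw [hU r (by omega)]
      exact hdeg1 hr
    have hN : {U (r - 1)} = G.neighborFinset (U r) := by
      apply Finset.eq_of_subset_of_card_le
      · intro v hv
        rw [SimpleGraph.mem_neighborFinset, Finset.mem_singleton.1 hv]
        have := hUadj (r - 1) (by omega)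
        rw [Nat.sub_add_cancel hr] at this
        exact this.symm
      · rw [SimpleGraph.card_neighborFinset_eq_degree, hd, Finset.card_singleton]
    have h := heq (U r)
    rw [← hN, Finset.sum_singleton, hd] at h
    push_cast at h
    have hpos := mul_nonneg hα0 (hx (U r)).le
    refine le_of_mul_le_mul_left ?_ hα
    have h2 : (1 - α) * ((g + g⁻¹) * x (U r)) = (ρ - 2 * α) * x (U r) := by
      rw [← hsum']; ring
    linarith
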